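/- Let (λ̄, A, ρ̄) be a partial H-bicomodule algebra, and let X = H ⊗ A ⊗ H be the H-bicomodule algebra with ρ = I_H ⊗ I_A ⊗ Δ and λ = Δ ⊗ I_A ⊗ I_H. Define θ : A → X by θ = (λ̄ ⊗ I_H) ∘ ρ̄. Then θ is an injective algebra homomorphism, θ = (I_H ⊗ ρ̄) ∘ λ̄, and for all a, b ∈ A: (λ(θ(a)) ⊗ 1_H)(1_H ⊗ ρ(θ(b))) = (I_H ⊗ θ ⊗ I_H)((λ̄(a) ⊗ 1_H)(1_H ⊗ ρ̄(b))). -/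

import Mathlib

/-!
STATEMENT 16: Let (λ̄, A, ρ̄) be a partial H-bicomodule algebra, and let
X = H ⊗ A ⊗ H be the H-bicomodule algebra with ρ = I_H ⊗ I_A ⊗ Δ and
λ = Δ ⊗ I_A ⊗ I_H.  Define θ : A → X by θ = (λ̄ ⊗ I_H) ∘ ρ̄.  Then θ is an injective
algebra homomorphism, θ = (I_H ⊗ ρ̄) ∘ λ̄, and for all a, b ∈ A:
  (λ(θ(a)) ⊗ 1_H)(1_H ⊗ ρ(θ(b))) = (I_H ⊗ θ ⊗ I_H)((λ̄(a) ⊗ 1_H)(1_H ⊗ ρ̄(b))).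

Iterated tensor products are associated to the left, with canonical associators
inserted where needed.
-/

open TensorProduct

set_option maxSynthPendingDepth 5
set_option synthInstance.maxHeartbeats 1000000
set_option maxHeartbeats 1000000

noncomputable section

variable {k : Type*} [Field k]
variable {H : Type*} [Ring H] [HopfAlgebra k H]

/-- Right partial `H`-comodule algebra axioms for `rho : A → A ⊗ H`. -/
def IsRightPartialComoduleAlgebra {A : Type*} [Ring A] [Algebra k A]
    (rho : A →ₗ[k] A ⊗[k] H) : Prop :=
  (∀ a b : A, rho (a * b) = rho a * rho b) ∧
  (∀ a : A,
    (TensorProduct.rid k A) ((LinearMap.lTensor A (Coalgebra.counit (R := k))) (rho a)) = a) ∧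
  (∀ a : A, (LinearMap.rTensor H rho) (rho a) =
    (rho 1 ⊗ₜ[k] (1 : H)) *
      (TensorProduct.assoc k A H H).symm
        ((LinearMap.lTensor A (Coalgebra.comul (R := k))) (rho a)))

/-- Left partial `H`-comodule algebra axioms for `lam : A → H ⊗ A`. -/
def IsLeftPartialComoduleAlgebra {A : Type*} [Ring A] [Algebra k A]
    (lam : A →ₗ[k] H ⊗[k] A) : Prop :=
  (∀ a : A,
    (TensorProduct.lid k A) ((LinearMap.rTensor A (Coalgebra.counit (R := k))) (lam a)) = a) ∧
  (∀ a b : A, lam (a * b) = lam a * lam b) ∧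
  (∀ a : A, (LinearMap.lTensor H lam) (lam a) =
    ((TensorProduct.assoc k H H A)
        ((LinearMap.rTensor A (Coalgebra.comul (R := k))) (lam a))) *
      ((1 : H) ⊗ₜ[k] lam 1))

/-- Partial `H`-bicomodule algebra: right and left partial comodule algebra with the
compatibility `(I_H ⊗ ρ̄)λ̄ = (λ̄ ⊗ I_H)ρ̄`. -/
def IsPartialBicomoduleAlgebra {A : Type*} [Ring A] [Algebra k A]
    (lam : A →ₗ[k] H ⊗[k] A) (rho : A →ₗ[k] A ⊗[k] H) : Prop :=
  IsRightPartialComoduleAlgebra rho ∧ IsLeftPartialComoduleAlgebra lam ∧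
  ∀ a : A, (TensorProduct.assoc k H A H) ((LinearMap.rTensor H lam) (rho a)) =
    (LinearMap.lTensor H rho) (lam a)

/-- `ρ = I_H ⊗ I_A ⊗ Δ : X → X ⊗ H` on `X = (H ⊗ A) ⊗ H`. -/
def rhoX (k : Type*) [Field k] (H : Type*) [Ring H] [HopfAlgebra k H]
    (A : Type*) [Ring A] [Algebra k A] :
    (H ⊗[k] A) ⊗[k] H →ₗ[k] ((H ⊗[k] A) ⊗[k] H) ⊗[k] H :=
  (TensorProduct.assoc k (H ⊗[k] A) H H).symm.toLinearMap ∘ₗ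
    LinearMap.lTensor (H ⊗[k] A) (Coalgebra.comul (R := k))

/-- `λ = Δ ⊗ I_A ⊗ I_H : X → H ⊗ X` on `X = (H ⊗ A) ⊗ H`. -/
def lamX (k : Type*) [Field k] (H : Type*) [Ring H] [HopfAlgebra k H]
    (A : Type*) [Ring A] [Algebra k A] :
    (H ⊗[k] A) ⊗[k] H →ₗ[k] H ⊗[k] ((H ⊗[k] A) ⊗[k] H) :=
  (TensorProduct.assoc k H (H ⊗[k] A) H).toLinearMap ∘ₗ
    LinearMap.rTensor H (TensorProduct.assoc k H H A).toLinearMap ∘ₗ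
    LinearMap.rTensor H (LinearMap.rTensor A (Coalgebra.comul (R := k)))

/-- `θ = (λ̄ ⊗ I_H) ∘ ρ̄ : A → (H ⊗ A) ⊗ H`. -/
def thetaMap {k : Type*} [Field k] {H : Type*} [Ring H] [HopfAlgebra k H]
    {A : Type*} [Ring A] [Algebra k A]
    (lam : A →ₗ[k] H ⊗[k] A) (rho : A →ₗ[k] A ⊗[k] H) :
    A →ₗ[k] (H ⊗[k] A) ⊗[k] H :=
  LinearMap.rTensor H lam ∘ₗ rho

/-!
Write `X = H ⊗ A ⊗ H` and `θ = (λ̄ ⊗ I) ρ̄ = (I ⊗ ρ̄) λ̄`. Injectivity of `θ` holds because `λ̄` and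
`ρ̄` are retracted by the counit, and multiplicativity is inherited from `λ̄` and `ρ̄`.

For the last identity, put `P = (I ⊗ θ) λ̄(a)`. Since `θ = (λ̄ ⊗ I) ρ̄`, the bicomodule compatibility
gives `P = (I ⊗ λ̄ ⊗ I)(I ⊗ ρ̄) λ̄(a) = (I ⊗ λ̄ ⊗ I)(λ̄ ⊗ I) ρ̄(a)`, and the left partial coaction axiom
turns this into `P = λ(θ(a)) (1 ⊗ λ̄(1) ⊗ 1)` (`lTensor_theta_lam`). The right partial coaction axiom
gives `(θ ⊗ I) ρ̄(b) = (θ(1) ⊗ 1) ρ(θ(b))` (`rTensor_theta_rho`). The right-hand side is therefore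
`(P ⊗ 1)(1 ⊗ θ(1) ⊗ 1)(1 ⊗ ρ(θ(b)))`. Here `θ(1)` is absorbed by `P`, as `θ` is multiplicative, and
the remaining factor `λ̄(1)` of `P` is absorbed by `ρ(θ(b))`, as `λ̄` is multiplicative.
-/

section Multiplicativity

variable {B C D : Type*} [Ring B] [Algebra k B] [Ring C] [Algebra k C] [Ring D] [Algebra k D]

/-- `f ⊗ I` is multiplicative when `f` is; `f` need not preserve the unit. -/
lemma rTensor_map_mul_of_mul (f : B →ₗ[k] C) (hf : ∀ a b, f (a * b) = f a * f b)
    (x y : B ⊗[k] D) :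
    LinearMap.rTensor D f (x * y) = LinearMap.rTensor D f x * LinearMap.rTensor D f y := by
  induction x with
  | zero => simp
  | add x₁ x₂ h₁ h₂ => simp only [add_mul, map_add, h₁, h₂]
  | tmul b d =>
    induction y with
    | zero => simp
    | add y₁ y₂ h₁ h₂ => simp only [mul_add, map_add, h₁, h₂]
    | tmul b₂ d₂ => simp [hf]

/-- `I ⊗ f` is multiplicative when `f` is; `f` need not preserve the unit. -/
lemma lTensor_map_mul_of_mul (f : B →ₗ[k] C) (hf : ∀ a b, f (a * b) = f a * f b)
    (x y : D ⊗[k] B) :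
    LinearMap.lTensor D f (x * y) = LinearMap.lTensor D f x * LinearMap.lTensor D f y := by
  induction x with
  | zero => simp
  | add x₁ x₂ h₁ h₂ => simp only [add_mul, map_add, h₁, h₂]
  | tmul d b =>
    induction y with
    | zero => simp
    | add y₁ y₂ h₁ h₂ => simp only [mul_add, map_add, h₁, h₂]
    | tmul d₂ b₂ => simp [hf]

lemma assoc_map_mul (x y : (B ⊗[k] C) ⊗[k] D) :
    TensorProduct.assoc k B C D (x * y) =
      TensorProduct.assoc k B C D x * TensorProduct.assoc k B C D y :=
  map_mul (Algebra.TensorProduct.assoc k k k B C D) x y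

lemma assoc_symm_map_mul (x y : B ⊗[k] (C ⊗[k] D)) :
    (TensorProduct.assoc k B C D).symm (x * y) =
      (TensorProduct.assoc k B C D).symm x * (TensorProduct.assoc k B C D).symm y :=
  map_mul (Algebra.TensorProduct.assoc k k k B C D).symm x y

end Multiplicativity

section Theta

variable {A : Type*} [Ring A] [Algebra k A]

/-- `I ⊗ θ = (I ⊗ λ̄ ⊗ I)(I ⊗ ρ̄)`, up to associators. -/
lemma lTensor_theta (lam : A →ₗ[k] H ⊗[k] A) (rho : A →ₗ[k] A ⊗[k] H) (z : H ⊗[k] A) :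
    LinearMap.lTensor H (thetaMap lam rho) z =
      TensorProduct.assoc k H (H ⊗[k] A) H (LinearMap.rTensor H (LinearMap.lTensor H lam)
        ((TensorProduct.assoc k H A H).symm (LinearMap.lTensor H rho z))) := by
  induction z with
  | zero => simp
  | add x y hx hy => simp only [map_add, hx, hy]
  | tmul h a =>
    simp only [LinearMap.lTensor_tmul, thetaMap, LinearMap.comp_apply]
    induction rho a with
    | zero => simp
    | add x y hx hy => simp only [map_add, tmul_add, hx, hy]
    | tmul c g => simp

/-- The left partial coaction axiom, tensored on the right with `H`. -/
lemma rTensor_lTensor_lam (lam : A →ₗ[k] H ⊗[k] A)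
    (hlam : IsLeftPartialComoduleAlgebra lam) (r : A ⊗[k] H) :
    TensorProduct.assoc k H (H ⊗[k] A) H (LinearMap.rTensor H (LinearMap.lTensor H lam)
        (LinearMap.rTensor H lam r)) =
      lamX k H A (LinearMap.rTensor H lam r) * ((1 : H) ⊗ₜ[k] (lam 1 ⊗ₜ[k] (1 : H))) := by
  induction r with
  | zero => simp
  | add x y hx hy => simp only [map_add, add_mul, hx, hy]
  | tmul c h =>
    simp only [LinearMap.rTensor_tmul, hlam.2.2, lamX, LinearMap.comp_apply,
      LinearEquiv.coe_coe]
    rw [← TensorProduct.assoc_tmul, ← assoc_map_mul, Algebra.TensorProduct.tmul_mul_tmul, mul_one]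

lemma lTensor_theta_lam (lam : A →ₗ[k] H ⊗[k] A) (rho : A →ₗ[k] A ⊗[k] H)
    (hA : IsPartialBicomoduleAlgebra lam rho) (a : A) :
    LinearMap.lTensor H (thetaMap lam rho) (lam a) =
      lamX k H A (thetaMap lam rho a) * ((1 : H) ⊗ₜ[k] (lam 1 ⊗ₜ[k] (1 : H))) := by
  rw [lTensor_theta, ← hA.2.2 a, LinearEquiv.symm_apply_apply, rTensor_lTensor_lam lam hA.2.1]
  rfl

/-- `(λ̄ ⊗ I ⊗ I)(I ⊗ Δ) = ρ (λ̄ ⊗ I)`. -/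
lemma rTensor_rTensor_comul (lam : A →ₗ[k] H ⊗[k] A) (r : A ⊗[k] H) :
    LinearMap.rTensor H (LinearMap.rTensor H lam) ((TensorProduct.assoc k A H H).symm
        (LinearMap.lTensor A (Coalgebra.comul (R := k)) r)) =
      rhoX k H A (LinearMap.rTensor H lam r) := by
  induction r with
  | zero => simp
  | add x y hx hy => simp only [map_add, hx, hy]
  | tmul c h =>
    simp only [LinearMap.rTensor_tmul, LinearMap.lTensor_tmul, rhoX, LinearMap.comp_apply,
      LinearEquiv.coe_coe]
    induction Coalgebra.comul (R := k) h with
    | zero => simp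
    | add x y hx hy => simp only [map_add, tmul_add, hx, hy]
    | tmul g₁ g₂ => simp

lemma rTensor_theta_rho (lam : A →ₗ[k] H ⊗[k] A) (rho : A →ₗ[k] A ⊗[k] H)
    (hA : IsPartialBicomoduleAlgebra lam rho) (b : A) :
    LinearMap.rTensor H (thetaMap lam rho) (rho b) =
      (thetaMap lam rho 1 ⊗ₜ[k] (1 : H)) * rhoX k H A (thetaMap lam rho b) := by
  rw [thetaMap, LinearMap.rTensor_comp_apply, hA.1.2.2,
    rTensor_map_mul_of_mul _ (rTensor_map_mul_of_mul lam hA.2.1.2.1), rTensor_rTensor_comul]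
  rfl

/-- `λ̄(1) ⊗ 1 ⊗ 1` acts as a left unit on the image of `ρ (λ̄ ⊗ I)`. -/
lemma lam_one_mul_rhoX (lam : A →ₗ[k] H ⊗[k] A) (hlam : ∀ a b, lam (a * b) = lam a * lam b)
    (r : A ⊗[k] H) :
    ((lam 1 ⊗ₜ[k] (1 : H)) ⊗ₜ[k] (1 : H)) * rhoX k H A (LinearMap.rTensor H lam r) =
      rhoX k H A (LinearMap.rTensor H lam r) := by
  rw [← rTensor_rTensor_comul]
  generalize (TensorProduct.assoc k A H H).symm _ = t
  have h1 : ((lam 1 ⊗ₜ[k] (1 : H)) ⊗ₜ[k] (1 : H)) =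
      LinearMap.rTensor H (LinearMap.rTensor H lam) 1 := rfl
  rw [h1, ← rTensor_map_mul_of_mul _ (rTensor_map_mul_of_mul lam hlam), one_mul]

lemma thetaMap_mul (lam : A →ₗ[k] H ⊗[k] A) (rho : A →ₗ[k] A ⊗[k] H)
    (hA : IsPartialBicomoduleAlgebra lam rho) (a b : A) :
    thetaMap lam rho (a * b) = thetaMap lam rho a * thetaMap lam rho b := by
  simp only [thetaMap, LinearMap.comp_apply]
  rw [hA.1.1, rTensor_map_mul_of_mul lam hA.2.1.2.1]

lemma thetaMap_injective (lam : A →ₗ[k] H ⊗[k] A) (rho : A →ₗ[k] A ⊗[k] H)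
    (hA : IsPartialBicomoduleAlgebra lam rho) :
    Function.Injective (thetaMap lam rho) := by
  -- the counit provides a linear retraction of `lam`, hence one of `lam ⊗ I`
  have hret : ((TensorProduct.lid k A).toLinearMap ∘ₗ
      LinearMap.rTensor A (Coalgebra.counit (R := k))) ∘ₗ lam = LinearMap.id :=
    LinearMap.ext hA.2.1.1
  have hlam : Function.Injective (LinearMap.rTensor H lam) := fun x y hxy => by
    have h := congrArg (LinearMap.rTensor H ((TensorProduct.lid k A).toLinearMap ∘ₗ
      LinearMap.rTensor A (Coalgebra.counit (R := k)))) hxy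
    rwa [← LinearMap.rTensor_comp_apply, ← LinearMap.rTensor_comp_apply, hret,
      LinearMap.rTensor_id, LinearMap.id_apply, LinearMap.id_apply] at h
  have hrho : Function.Injective rho := fun x y hxy => by
    rw [← hA.1.2.1 x, hxy, hA.1.2.1 y]
  exact hlam.comp hrho

/-- `(I ⊗ f ⊗ I)(1 ⊗ r) = 1 ⊗ (f ⊗ I) r`, up to associators. -/
lemma rTensor_lTensor_assoc_symm {B : Type*} [Ring B] [Algebra k B] (f : A →ₗ[k] B)
    (r : A ⊗[k] H) :
    LinearMap.rTensor H (LinearMap.lTensor H f)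
        ((TensorProduct.assoc k H A H).symm ((1 : H) ⊗ₜ[k] r)) =
      (TensorProduct.assoc k H B H).symm ((1 : H) ⊗ₜ[k] LinearMap.rTensor H f r) := by
  induction r with
  | zero => simp
  | add x y hx hy => simp only [map_add, tmul_add, hx, hy]
  | tmul c h => simp

end Theta

theorem theta_embeds_partial_bicomodule_algebra
    {A : Type*} [Ring A] [Algebra k A]
    (lam : A →ₗ[k] H ⊗[k] A) (rho : A →ₗ[k] A ⊗[k] H)
    (hA : IsPartialBicomoduleAlgebra lam rho) :
    -- θ is an injective algebra homomorphism
    Function.Injective (thetaMap lam rho) ∧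
    (∀ a b : A, thetaMap lam rho (a * b) = thetaMap lam rho a * thetaMap lam rho b) ∧
    -- θ = (I_H ⊗ ρ̄) ∘ λ̄
    (∀ a : A, thetaMap lam rho a =
      (TensorProduct.assoc k H A H).symm ((LinearMap.lTensor H rho) (lam a))) ∧
    -- (λ(θ(a)) ⊗ 1_H)(1_H ⊗ ρ(θ(b))) = (I_H ⊗ θ ⊗ I_H)((λ̄(a) ⊗ 1_H)(1_H ⊗ ρ̄(b)))
    (∀ a b : A,
      (lamX k H A (thetaMap lam rho a) ⊗ₜ[k] (1 : H)) *
          (TensorProduct.assoc k H ((H ⊗[k] A) ⊗[k] H) H).symm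
            ((1 : H) ⊗ₜ[k] rhoX k H A (thetaMap lam rho b)) =
        (LinearMap.rTensor H (LinearMap.lTensor H (thetaMap lam rho)))
          ((lam a ⊗ₜ[k] (1 : H)) *
            (TensorProduct.assoc k H A H).symm ((1 : H) ⊗ₜ[k] rho b))) := by
  have hmul := thetaMap_mul lam rho hA
  refine ⟨thetaMap_injective lam rho hA, hmul, fun a => ?_, fun a b => ?_⟩
  · rw [← hA.2.2 a, LinearEquiv.symm_apply_apply]
    rfl
  · have hsplit : ∀ x y : ((H ⊗[k] A) ⊗[k] H) ⊗[k] H,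
        (TensorProduct.assoc k H ((H ⊗[k] A) ⊗[k] H) H).symm ((1 : H) ⊗ₜ[k] (x * y)) =
          (TensorProduct.assoc k H ((H ⊗[k] A) ⊗[k] H) H).symm ((1 : H) ⊗ₜ[k] x) *
          (TensorProduct.assoc k H ((H ⊗[k] A) ⊗[k] H) H).symm ((1 : H) ⊗ₜ[k] y) := fun x y => by
      rw [← assoc_symm_map_mul, Algebra.TensorProduct.tmul_mul_tmul, mul_one]
    -- `P (1 ⊗ θ(1)) = P` for `P = (I ⊗ θ) λ̄(a)`
    have habs : LinearMap.lTensor H (thetaMap lam rho) (lam a) *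
          ((1 : H) ⊗ₜ[k] thetaMap lam rho 1) =
        LinearMap.lTensor H (thetaMap lam rho) (lam a) := by
      have h1 : (1 : H) ⊗ₜ[k] thetaMap lam rho 1 =
        LinearMap.lTensor H (thetaMap lam rho) 1 := rfl
      rw [h1, ← lTensor_map_mul_of_mul _ hmul, mul_one]
    have hrho : ((lam 1 ⊗ₜ[k] (1 : H)) ⊗ₜ[k] (1 : H)) * rhoX k H A (thetaMap lam rho b) =
        rhoX k H A (thetaMap lam rho b) := lam_one_mul_rhoX lam hA.2.1.2.1 (rho b)
    rw [rTensor_map_mul_of_mul _ (lTensor_map_mul_of_mul _ hmul), LinearMap.rTensor_tmul,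
      rTensor_lTensor_assoc_symm, rTensor_theta_rho lam rho hA, hsplit,
      TensorProduct.assoc_symm_tmul, ← mul_assoc, Algebra.TensorProduct.tmul_mul_tmul, mul_one,
      habs, lTensor_theta_lam lam rho hA]
    -- the factor `λ̄(1)` is absorbed by `ρ(θ(b))`
    conv_lhs => rw [← hrho, hsplit, TensorProduct.assoc_symm_tmul, ← mul_assoc,
      Algebra.TensorProduct.tmul_mul_tmul, mul_one]
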